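/- arXiv:2307.15892 — 3 statements merged into one kernel-verified Lean document; each statement's English description precedes it below -/
import Mathlib

section
/- Let f: ℝ^d → ℝ be differentiable with a global minimizer x* (so f(x*) ≤ f(x) for all x and ∇f(x*) = 0), and let μ > 0. If f is μ-strongly quasi-convex, then for every x ∈ ℝ^d: ‖∇f(x)‖ ≥ μ·‖x − x*‖. -/
open RealInnerProductSpace

/-! Let `v = x - a` and let `φ t = f (a + t v)` be the restriction of `f` to the segment from `a`
to `x`. Strong quasi-convexity at `a + t v` says `φ t - φ 0 + μ/2 t² ‖v‖² ≤ t φ' t`, that is, the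
slope `(φ t - φ 0) / t` has derivative at least `μ/2 ‖v‖²`. The slope tends to `φ' 0` at `0`, so its
mean value theorem on `[0, 1]` gives the quadratic growth `φ 1 - φ 0 ≥ φ' 0 + μ/2 ‖v‖²`. Adding
strong quasi-convexity at `x` yields `(f' x - f' a) v ≥ μ ‖v‖²`, so `‖f' x - f' a‖ ≥ μ ‖v‖`, and
`f' a = 0` at a minimizer. -/

section Slope

variable {φ φ' : ℝ → ℝ} {a b t m : ℝ}

theorem hasDerivAt_slope (hφ : HasDerivAt φ m t) (hat : t ≠ a) :
    HasDerivAt (slope φ a) ((m - slope φ a t) / (t - a)) t := by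
  have hta : t - a ≠ 0 := sub_ne_zero.2 hat
  rw [slope_fun_def_field]
  convert! (hφ.sub_const (φ a)).div ((hasDerivAt_id t).sub_const a) hta using 1
  simp only [id_eq]
  field_simp

theorem exists_slope_sub_eq_mul_sub_slope_div (hab : a < b)
    (ha : HasDerivWithinAt φ m (Set.Ioi a) a) (hφ : ∀ t ∈ Set.Ioo a b, HasDerivAt φ (φ' t) t)
    (hb : ContinuousWithinAt φ (Set.Iio b) b) :
    ∃ t ∈ Set.Ioo a b, slope φ a b - m = (b - a) * ((φ' t - slope φ a t) / (t - a)) := by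
  have slope_b : ContinuousWithinAt (slope φ a) (Set.Iio b) b := by
    rw [slope_fun_def_field]
    exact (hb.sub_const _).div (continuousWithinAt_id.sub_const a) (sub_ne_zero.2 hab.ne')
  obtain ⟨t, ht, h⟩ := exists_ratio_hasDerivAt_eq_ratio_slope' _ _ hab _ _
    (fun t ht ↦ hasDerivAt_slope (hφ t ht) ht.1.ne') (fun t _ ↦ hasDerivAt_id t)
    ((hasDerivWithinAt_iff_tendsto_slope' Set.self_notMem_Ioi).1 ha)
    continuousWithinAt_id slope_b continuousWithinAt_id
  exact ⟨t, ht, by simpa only [id_eq, mul_one] using h.symm⟩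

end Slope

section StrongQuasiConvex

variable {E : Type*} [NormedAddCommGroup E] [NormedSpace ℝ E]
  {s : Set E} {μ : ℝ} {f : E → ℝ} {f' : E → E →L[ℝ] ℝ} {a x : E}

theorem hasDerivWithinAt_comp_lineMap (hs : StarConvex ℝ a s)
    (hf : ∀ x ∈ s, HasFDerivWithinAt f (f' x) s x) (hx : x ∈ s) {t : ℝ} (ht : t ∈ Set.Icc 0 1) :
    HasDerivWithinAt (fun t ↦ f (AffineMap.lineMap a x t)) (f' (AffineMap.lineMap a x t) (x - a))
      (Set.Icc 0 1) t := by
  have maps : Set.MapsTo (AffineMap.lineMap a x) (Set.Icc (0 : ℝ) 1) s := fun r hr ↦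
    hs.segment_subset hx (lineMap_mem_segment ℝ a x hr)
  exact (hf _ (maps ht)).comp_hasDerivWithinAt t AffineMap.hasDerivWithinAt_lineMap maps

/-- Strong quasi-convexity of `f` on `s` with modulus `μ` and center `a`, the minimizer `x*` in the
classical definition. The derivative of `f` is passed as a parameter `f'`, with functionals in place
of gradients so that the notion makes sense in any normed space; the definition itself does not tie
`f'` to `f`. -/
def StrongQuasiConvexOn (s : Set E) (μ : ℝ) (f : E → ℝ) (f' : E → E →L[ℝ] ℝ) (a : E) : Prop :=
  ∀ x ∈ s, f x + f' x (a - x) + μ / 2 * ‖a - x‖ ^ 2 ≤ f a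

namespace StrongQuasiConvexOn

theorem lineMap_sub_add_le (h : StrongQuasiConvexOn s μ f f' a) {t : ℝ}
    (ht : AffineMap.lineMap a x t ∈ s) :
    f (AffineMap.lineMap a x t) - f a + μ / 2 * ‖x - a‖ ^ 2 * t ^ 2 ≤
      t * f' (AffineMap.lineMap a x t) (x - a) := by
  have center_sub : a - AffineMap.lineMap a x t = -(t • (x - a)) := by
    rw [AffineMap.lineMap_apply_module']
    abel
  have := h _ ht
  rw [center_sub, map_neg, map_smul, smul_eq_mul, norm_neg, norm_smul, mul_pow, Real.norm_eq_abs,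
    sq_abs] at this
  linarith

theorem add_mul_norm_sub_sq_le (h : StrongQuasiConvexOn s μ f f' a) (hs : StarConvex ℝ a s)
    (hf : ∀ x ∈ s, HasFDerivWithinAt f (f' x) s x) (hx : x ∈ s) :
    f a + f' a (x - a) + μ / 2 * ‖x - a‖ ^ 2 ≤ f x := by
  have deriv_line {t : ℝ} (ht : t ∈ Set.Icc 0 1) := hasDerivWithinAt_comp_lineMap hs hf hx ht
  obtain ⟨t, ht, slope_eq⟩ := exists_slope_sub_eq_mul_sub_slope_div one_pos
    ((deriv_line (Set.left_mem_Icc.2 zero_le_one)).mono_of_mem_nhdsWithin (Icc_mem_nhdsGT one_pos))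
    (fun t ht ↦ (deriv_line (Set.Ioo_subset_Icc_self ht)).hasDerivAt (Icc_mem_nhds ht.1 ht.2))
    ((deriv_line (Set.right_mem_Icc.2 zero_le_one)).continuousWithinAt.mono_of_mem_nhdsWithin
      (Icc_mem_nhdsLT one_pos))
  have ht_mem : AffineMap.lineMap a x t ∈ s :=
    hs.segment_subset hx (lineMap_mem_segment ℝ a x (Set.Ioo_subset_Icc_self ht))
  have slope_deriv_ge : μ / 2 * ‖x - a‖ ^ 2 ≤
      (f' (AffineMap.lineMap a x t) (x - a) - (f (AffineMap.lineMap a x t) - f a) / t) / t := by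
    have ht_pos : 0 < t := ht.1
    rw [le_div_iff₀ ht_pos, le_sub_iff_add_le, ← le_sub_iff_add_le', div_le_iff₀ ht_pos]
    linarith [h.lineMap_sub_add_le ht_mem]
  simp only [slope_def_field, AffineMap.lineMap_apply_zero, AffineMap.lineMap_apply_one, sub_zero,
    div_one, one_mul] at slope_eq
  linarith

theorem mul_norm_sub_sq_le (h : StrongQuasiConvexOn s μ f f' a) (hs : StarConvex ℝ a s)
    (hf : ∀ x ∈ s, HasFDerivWithinAt f (f' x) s x) (hx : x ∈ s) :
    μ * ‖x - a‖ ^ 2 ≤ (f' x - f' a) (x - a) := by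
  have growth := h.add_mul_norm_sub_sq_le hs hf hx
  have at_x := h x hx
  rw [← neg_sub x a, map_neg, norm_neg] at at_x
  rw [sub_apply]
  linarith

end StrongQuasiConvexOn

theorem stmt3_general (hs : StarConvex ℝ a s) (hf : ∀ x ∈ s, HasFDerivWithinAt f (f' x) s x)
    (hsqc : StrongQuasiConvexOn s μ f f' a) : ∀ x ∈ s, μ * ‖x - a‖ ≤ ‖f' x - f' a‖ := by
  intro x hx
  rcases (norm_nonneg (x - a)).eq_or_lt with norm_zero | norm_pos
  · rw [← norm_zero, mul_zero]
    exact norm_nonneg _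
  · refine le_of_mul_le_mul_right ?_ norm_pos
    calc μ * ‖x - a‖ * ‖x - a‖ = μ * ‖x - a‖ ^ 2 := by ring
      _ ≤ (f' x - f' a) (x - a) := hsqc.mul_norm_sub_sq_le hs hf hx
      _ ≤ ‖f' x - f' a‖ * ‖x - a‖ := (le_abs_self _).trans ((f' x - f' a).le_opNorm _)

end StrongQuasiConvex

/-- Lemma 4 of the paper.
If `f : ℝ^d → ℝ` is differentiable with global minimizer `x*` (so `∇f(x*) = 0`) and
`μ`-strongly quasi-convex with `μ > 0`, then `‖∇f(x)‖ ≥ μ ‖x − x*‖` for every `x`. -/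
theorem stmt3 {d : ℕ} (f : EuclideanSpace ℝ (Fin d) → ℝ) (hf : Differentiable ℝ f)
    (xstar : EuclideanSpace ℝ (Fin d)) (hmin : ∀ x, f xstar ≤ f x)
    (hgrad0 : gradient f xstar = 0) (μ : ℝ) (hμ : 0 < μ)
    (hsqc : ∀ x, f x + ⟪gradient f x, xstar - x⟫ + μ / 2 * ‖xstar - x‖ ^ 2 ≤ f xstar) :
    ∀ x, μ * ‖x - xstar‖ ≤ ‖gradient f x‖ := by
  intro x
  simpa only [hgrad0, sub_zero, ← map_sub, LinearIsometryEquiv.norm_map] using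
    stmt3_general (f' := fun y ↦ InnerProductSpace.toDual ℝ _ (gradient f y))
      (starConvex_univ xstar) (fun y _ ↦ (hf y).hasGradientAt.hasFDerivAt.hasFDerivWithinAt)
      (fun y _ ↦ hsqc y) x (Set.mem_univ x)
end

section
/- Let A be an invertible real d×d matrix and U a symmetric positive definite real d×d matrix. Then the matrix AᵀU⁻¹A is invertible, and for all θ, b ∈ ℝ^d: (AᵀU⁻¹A)⁻¹·AᵀU⁻¹·(Aθ + b) = A⁻¹·(Aθ + b). -/
open Matrix

section CommRing

variable {n R : Type*} [Fintype n] [DecidableEq n] [CommRing R]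

theorem isUnit_det_transpose_mul_inv {A U : Matrix n n R}
    (hA : IsUnit A.det) (hU : IsUnit U.det) : IsUnit (Aᵀ * U⁻¹).det := by
  rw [det_mul]
  exact (isUnit_det_transpose A hA).mul (isUnit_nonsing_inv_det U hU)

theorem inv_mul_mul_eq_inv_of_isUnit_det {P : Matrix n n R} (hP : IsUnit P.det)
    (A : Matrix n n R) : (P * A)⁻¹ * P = A⁻¹ := by
  rw [Matrix.mul_inv_rev, nonsing_inv_mul_cancel_right P A⁻¹ hP]

theorem stmt11_general (A U : Matrix n n R) (hA : IsUnit A.det) (hU : IsUnit U.det) :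
    IsUnit (Aᵀ * U⁻¹ * A).det ∧
      ∀ θ b : n → R,
        (Aᵀ * U⁻¹ * A)⁻¹.mulVec ((Aᵀ * U⁻¹).mulVec (A.mulVec θ + b))
          = A⁻¹.mulVec (A.mulVec θ + b) := by
  have hP : IsUnit (Aᵀ * U⁻¹).det := isUnit_det_transpose_mul_inv hA hU
  refine ⟨?_, fun θ b => ?_⟩
  · rw [det_mul]
    exact hP.mul hA
  · rw [mulVec_mulVec, inv_mul_mul_eq_inv_of_isUnit_det hP]

end CommRing

/-- the paper's Newton-invariance claim, Section 2.3.
For `A` invertible and `U` symmetric positive definite, the matrix `AᵀU⁻¹A` is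
invertible and `(AᵀU⁻¹A)⁻¹ AᵀU⁻¹ (Aθ + b) = A⁻¹(Aθ + b)` for all `θ, b`:
the Newton update direction is invariant in the choice of the preconditioner `U`. -/
theorem stmt11 {d : ℕ} (A U : Matrix (Fin d) (Fin d) ℝ)
    (hA : IsUnit A.det) (hU : U.PosDef) :
    IsUnit (Aᵀ * U⁻¹ * A).det ∧
      ∀ θ b : Fin d → ℝ,
        (Aᵀ * U⁻¹ * A)⁻¹.mulVec ((Aᵀ * U⁻¹).mulVec (A.mulVec θ + b))
          = A⁻¹.mulVec (A.mulVec θ + b) :=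
  stmt11_general A U hA hU.det_pos.ne'.isUnit
end

section
/- Let γ ∈ ℝ, and let (φᵢ, φ′ᵢ, rᵢ) for i = 1, …, T₁ and (ψⱼ, ψ′ⱼ, sⱼ) for j = 1, …, T₂ be two finite collections of triples in ℝ^d × ℝ^d × ℝ. Define the TD errors δᵢ(θ) = rᵢ + γφ′ᵢᵀθ − φᵢᵀθ and εⱼ(θ) = sⱼ + γψ′ⱼᵀθ − ψⱼᵀθ, the empirical NEU loss N̂(θ) = Σᵢ Σⱼ (φᵢᵀψⱼ)·δᵢ(θ)·εⱼ(θ), and the matrices Ā₁ = Σᵢ φᵢ(γφ′ᵢ − φᵢ)ᵀ, Ā₂ = Σⱼ ψⱼ(γψ′ⱼ − ψⱼ)ᵀ with vectors b̄₁ = Σᵢ φᵢrᵢ, b̄₂ = Σⱼ ψⱼsⱼ. Then for every θ ∈ ℝ^d: ∇N̂(θ) = Ā₂ᵀ(Ā₁θ + b̄₁) + Ā₁ᵀ(Ā₂θ + b̄₂). -/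
open Matrix

/-!
The double sum defining the loss factors as an inner product: `∑ᵢ δᵢ(θ) φᵢ = Ā₁θ + b̄₁` and
`∑ⱼ εⱼ(θ) ψⱼ = Ā₂θ + b̄₂`, so that `N̂(θ) = ⟪Ā₁θ + b̄₁, Ā₂θ + b̄₂⟫`. The gradient formula is then
the product rule for the inner product, with the two linear parts moved across by their adjoints.
-/

open InnerProductSpace WithLp
open scoped InnerProduct RealInnerProductSpace

section Gradient

variable {E F : Type*}
  [NormedAddCommGroup E] [InnerProductSpace ℝ E] [CompleteSpace E]
  [NormedAddCommGroup F] [InnerProductSpace ℝ F] [CompleteSpace F]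

theorem hasGradientAt_inner_of_hasFDerivAt {f g : E → F} {f' g' : E →L[ℝ] F} {x : E}
    (hf : HasFDerivAt f f' x) (hg : HasFDerivAt g g' x) :
    HasGradientAt (fun y => ⟪f y, g y⟫) ((g'†) (f x) + (f'†) (g x)) x := by
  rw [hasGradientAt_iff_hasFDerivAt]
  refine (hf.inner ℝ hg).congr_fderiv (ContinuousLinearMap.ext fun v => ?_)
  calc ⟪f x, g' v⟫ + ⟪f' v, g x⟫
      = ⟪(g'†) (f x), v⟫ + ⟪(f'†) (g x), v⟫ := by
        rw [ContinuousLinearMap.adjoint_inner_left, ContinuousLinearMap.adjoint_inner_left,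
          real_inner_comm (f' v)]
    _ = ⟪(g'†) (f x) + (f'†) (g x), v⟫ := (inner_add_left _ _ _).symm

theorem hasGradientAt_inner_affine (A B : E →L[ℝ] F) (a b : F) (x : E) :
    HasGradientAt (fun y => ⟪A y + a, B y + b⟫) ((B†) (A x + a) + (A†) (B x + b)) x :=
  hasGradientAt_inner_of_hasFDerivAt (A.hasFDerivAt.add_const a) (B.hasFDerivAt.add_const b)

end Gradient

section TemporalDifference

variable {E : Type*} [NormedAddCommGroup E] [InnerProductSpace ℝ E]
  {ι κ : Type*} [Fintype ι] [Fintype κ]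

/-- The TD error at the parameter `θ` of a transition with reward `r` from a state with feature
vector `x` to a state with feature vector `x'`, for the discount factor `γ`. -/
def tdError (γ : ℝ) (x x' : E) (r : ℝ) (θ : E) : ℝ :=
  r + γ * ⟪x', θ⟫ - ⟪x, θ⟫

/-- The empirical NEU loss `N̂` of two buffers of transitions `(φ i, φ' i, r i)` and
`(ψ j, ψ' j, s j)`, with the similarity of two states given by the inner product of their
features. -/
def empiricalNEU (γ : ℝ) (φ φ' : ι → E) (r : ι → ℝ) (ψ ψ' : κ → E) (s : κ → ℝ) (θ : E) : ℝ :=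
  ∑ i, ∑ j, ⟪φ i, ψ j⟫ * tdError γ (φ i) (φ' i) (r i) θ * tdError γ (ψ j) (ψ' j) (s j) θ

/-- The matrix `Ā` of a buffer, as a continuous linear map: `rankOne ℝ x y` stands for the outer
product `x yᵀ`. The sum is not divided by the size of the buffer. -/
noncomputable def tdOperator (γ : ℝ) (φ φ' : ι → E) : E →L[ℝ] E :=
  ∑ i, rankOne ℝ (φ i) (γ • φ' i - φ i)

/-- The feature-reward vector `b̄` of a buffer, unnormalized like `tdOperator`: `Āθ + b̄` is the
expected TD update at `θ`. -/
def tdVector (φ : ι → E) (r : ι → ℝ) : E :=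
  ∑ i, r i • φ i

theorem sum_tdError_smul (γ : ℝ) (φ φ' : ι → E) (r : ι → ℝ) (θ : E) :
    ∑ i, tdError γ (φ i) (φ' i) (r i) θ • φ i = tdOperator γ φ φ' θ + tdVector φ r := by
  have tdError_eq (i : ι) :
      tdError γ (φ i) (φ' i) (r i) θ = ⟪γ • φ' i - φ i, θ⟫ + r i := by
    rw [tdError, inner_sub_left, real_inner_smul_left]
    ring
  simp only [tdError_eq, add_smul, Finset.sum_add_distrib, tdOperator, tdVector,
    _root_.sum_apply, rankOne_apply]

theorem empiricalNEU_eq_inner (γ : ℝ) (φ φ' : ι → E) (r : ι → ℝ) (ψ ψ' : κ → E) (s : κ → ℝ)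
    (θ : E) :
    empiricalNEU γ φ φ' r ψ ψ' s θ =
      ⟪tdOperator γ φ φ' θ + tdVector φ r, tdOperator γ ψ ψ' θ + tdVector ψ s⟫ := by
  rw [← sum_tdError_smul, ← sum_tdError_smul, sum_inner]
  refine Finset.sum_congr rfl fun i _ => ?_
  rw [inner_sum]
  refine Finset.sum_congr rfl fun j _ => ?_
  rw [real_inner_smul_left, real_inner_smul_right]
  ring

theorem stmt13_general [CompleteSpace E] (γ : ℝ) (φ φ' : ι → E) (r : ι → ℝ)
    (ψ ψ' : κ → E) (s : κ → ℝ) (θ : E) :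
    HasGradientAt (empiricalNEU γ φ φ' r ψ ψ' s)
      (((tdOperator γ ψ ψ')†) (tdOperator γ φ φ' θ + tdVector φ r)
        + ((tdOperator γ φ φ')†) (tdOperator γ ψ ψ' θ + tdVector ψ s)) θ := by
  rw [funext (empiricalNEU_eq_inner γ φ φ' r ψ ψ' s)]
  exact hasGradientAt_inner_affine _ _ _ _ θ

end TemporalDifference

section Coordinates

variable {n ι κ : Type*} [Fintype n] [Fintype ι] [Fintype κ]

theorem empiricalNEU_toLp (γ : ℝ) (φ φ' : ι → n → ℝ) (r : ι → ℝ) (ψ ψ' : κ → n → ℝ) (s : κ → ℝ) :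
    empiricalNEU γ (toLp 2 ∘ φ) (toLp 2 ∘ φ') r (toLp 2 ∘ ψ) (toLp 2 ∘ ψ') s =
      fun θ : EuclideanSpace ℝ n => ∑ i, ∑ j, (φ i ⬝ᵥ ψ j)
        * (r i + γ * (φ' i ⬝ᵥ ofLp θ) - φ i ⬝ᵥ ofLp θ)
        * (s j + γ * (ψ' j ⬝ᵥ ofLp θ) - ψ j ⬝ᵥ ofLp θ) := by
  funext θ
  simp only [empiricalNEU, tdError, Function.comp_apply, EuclideanSpace.inner_eq_star_dotProduct,
    star_trivial, dotProduct_comm]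

theorem tdVector_toLp (φ : ι → n → ℝ) (r : ι → ℝ) :
    tdVector (toLp 2 ∘ φ) r = toLp 2 (∑ i, r i • φ i) := by
  simp only [tdVector, Function.comp_apply, toLp_sum, toLp_smul]

variable [DecidableEq n]

theorem toEuclideanCLM_vecMulVec {𝕜 : Type*} [RCLike 𝕜] (x y : n → 𝕜) :
    toEuclideanCLM (𝕜 := 𝕜) (vecMulVec x (star y)) = rankOne 𝕜 (toLp 2 x) (toLp 2 y) := by
  ext z i
  simp [vecMulVec_mulVec, EuclideanSpace.inner_eq_star_dotProduct, dotProduct_comm, mul_comm]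

theorem adjoint_toEuclideanCLM {𝕜 : Type*} [RCLike 𝕜] (A : Matrix n n 𝕜) :
    (toEuclideanCLM (𝕜 := 𝕜) A)† = toEuclideanCLM (𝕜 := 𝕜) Aᴴ :=
  (map_star toEuclideanCLM A).symm

theorem tdOperator_toLp (γ : ℝ) (φ φ' : ι → n → ℝ) :
    tdOperator γ (toLp 2 ∘ φ) (toLp 2 ∘ φ') =
      toEuclideanCLM (𝕜 := ℝ) (∑ i, vecMulVec (φ i) (γ • φ' i - φ i)) := by
  rw [map_sum]
  exact Finset.sum_congr rfl fun i _ => (toEuclideanCLM_vecMulVec (φ i) (γ • φ' i - φ i)).symm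

end Coordinates

/-- Section 4 of the paper: gradient of the empirical NEU loss.
The empirical NEU loss `N̂(θ) = ∑ᵢ ∑ⱼ (φᵢᵀψⱼ) δᵢ(θ) εⱼ(θ)` over two buffers has
gradient `∇N̂(θ) = Ā₂ᵀ(Ā₁θ + b̄₁) + Ā₁ᵀ(Ā₂θ + b̄₂)`, where
`Āₖ` are the (unnormalized) empirical feature-transition matrices and `b̄ₖ` the
empirical feature-reward vectors.  Here `ℝ^d` is `EuclideanSpace ℝ (Fin d)` and the
coercion `WithLp.equiv` mediates between it and plain vectors. -/
theorem stmt13 {d : ℕ} (γ : ℝ) {T₁ T₂ : ℕ}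
    (φ φ' : Fin T₁ → Fin d → ℝ) (r : Fin T₁ → ℝ)
    (ψ ψ' : Fin T₂ → Fin d → ℝ) (s : Fin T₂ → ℝ)
    (Nhat : EuclideanSpace ℝ (Fin d) → ℝ)
    (hN : Nhat = fun θ => ∑ i, ∑ j, (φ i ⬝ᵥ ψ j)
        * (r i + γ * (φ' i ⬝ᵥ (WithLp.equiv 2 (Fin d → ℝ)) θ)
            - φ i ⬝ᵥ (WithLp.equiv 2 (Fin d → ℝ)) θ)
        * (s j + γ * (ψ' j ⬝ᵥ (WithLp.equiv 2 (Fin d → ℝ)) θ)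
            - ψ j ⬝ᵥ (WithLp.equiv 2 (Fin d → ℝ)) θ))
    (A₁ A₂ : Matrix (Fin d) (Fin d) ℝ) (b₁ b₂ : Fin d → ℝ)
    (hA₁ : A₁ = ∑ i, vecMulVec (φ i) (γ • φ' i - φ i))
    (hA₂ : A₂ = ∑ j, vecMulVec (ψ j) (γ • ψ' j - ψ j))
    (hb₁ : b₁ = ∑ i, r i • φ i) (hb₂ : b₂ = ∑ j, s j • ψ j) :
    ∀ θ : EuclideanSpace ℝ (Fin d),
      HasGradientAt Nhat
        ((WithLp.equiv 2 (Fin d → ℝ)).symm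
          (A₂ᵀ.mulVec (A₁.mulVec ((WithLp.equiv 2 (Fin d → ℝ)) θ) + b₁)
            + A₁ᵀ.mulVec (A₂.mulVec ((WithLp.equiv 2 (Fin d → ℝ)) θ) + b₂))) θ := by
  subst hN hA₁ hA₂ hb₁ hb₂
  intro θ
  simpa only [empiricalNEU_toLp, tdOperator_toLp, tdVector_toLp, adjoint_toEuclideanCLM,
    conjTranspose_eq_transpose_of_trivial, equiv_apply, equiv_symm_apply, toLp_add,
    ← toEuclideanCLM_toLp, toLp_ofLp] using
    stmt13_general γ (toLp 2 ∘ φ) (toLp 2 ∘ φ') r (toLp 2 ∘ ψ) (toLp 2 ∘ ψ') s θ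
end
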